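/- arXiv:1905.08445 — 4 statements merged into one kernel-verified Lean document; each statement's English description precedes it below -/
import Mathlib

section
/- Single-valuedness of the Bregman proximal mapping under semiconvexity: under Assumption H1 and the Bregman setting, if g is semiconvex with modulus ρ ≥ 0 and the stepsize satisfies 0 < ε, ε·L < m and ε·ρ < m, then for every x ∈ ℝ^n the set T(x) of global minimizers of y ↦ ⟨∇f(x), y − x⟩ + g(y) + D(x,y)/ε contains exactly one point (it is a singleton). -/
/-
The smooth term enters the objective of `T(x)` only through its linearization, so that objective is
strongly convex with modulus `m / ε - ρ > 0`. A lower semicontinuous strongly convex function is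
bounded below, because the quadratic growth beats any continuous affine minorant, and its
minimizing sequences are Cauchy: the midpoint of two almost optimal points would otherwise fall
below the infimum. Completeness then yields the minimizer.
-/

open Set Metric Filter Topology
open scoped RealInnerProductSpace

noncomputable section

variable {E : Type*} [NormedAddCommGroup E] [InnerProductSpace ℝ E] [FiniteDimensional ℝ E]

/-- The Bregman distance generated by `K` (with gradient `K'`). -/
def bregD (K : E → ℝ) (K' : E → E) (x y : E) : ℝ := K y - K x - ⟪K' x, y - x⟫

/-- The Bregman proximal mapping: the set of global minimizers of
`y ↦ ⟪∇f x, y - x⟫ + g y + D(x,y)/ε`. -/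
def bregT (f' : E → E) (g : E → ℝ) (K : E → ℝ) (K' : E → E) (ε : ℝ) (x : E) : Set E :=
  {y | ∀ z, ⟪f' x, y - x⟫ + g y + bregD K K' x y / ε ≤ ⟪f' x, z - x⟫ + g z + bregD K K' x z / ε}

/-- The Bregman proximal envelope. -/
def bregEnv (f : E → ℝ) (f' : E → E) (g : E → ℝ) (K : E → ℝ) (K' : E → E) (ε : ℝ) (x : E) : ℝ :=
  ⨅ y : E, (f x + ⟪f' x, y - x⟫ + g y + bregD K K' x y / ε)

theorem le_of_tendsto_of_lowerSemicontinuousWithinAt {α ι : Type*} [TopologicalSpace α]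
    {φ : α → ℝ} {s : Set α} {y : α} (hlsc : LowerSemicontinuousWithinAt φ s y) {l : Filter ι}
    [l.NeBot] {u : ι → α} (huy : Tendsto u l (𝓝[s] y)) {r : ℝ}
    (hur : Tendsto (fun i => φ (u i)) l (𝓝 r)) : φ y ≤ r :=
  le_of_forall_lt_imp_le_of_dense fun a ha =>
    ge_of_tendsto hur ((huy.eventually (hlsc a ha)).mono fun _ => le_of_lt)

section StrongConvex

variable {V : Type*} [NormedAddCommGroup V] [NormedSpace ℝ V] {s : Set V} {φ ψ : V → ℝ}
  {c d r ε : ℝ} {x y : V}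

theorem strongConvexOn_add (hφ : StrongConvexOn s c φ) (hψ : StrongConvexOn s d ψ) :
    StrongConvexOn s (c + d) fun y => φ y + ψ y := by
  have h := UniformConvexOn.add hφ hψ
  have hmod : ((fun t : ℝ => c / 2 * t ^ 2) + fun t : ℝ => d / 2 * t ^ 2) =
      fun t => (c + d) / 2 * t ^ 2 := by
    ext t
    simp only [Pi.add_apply]
    ring
  rwa [hmod] at h

theorem strongConvexOn_div (hφ : StrongConvexOn s c φ) (hε : 0 ≤ ε) :
    StrongConvexOn s (c / ε) fun y => φ y / ε := by
  refine ⟨hφ.1, fun x hx y hy a b ha hb hab => ?_⟩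
  have h := div_le_div_of_nonneg_right (hφ.2 hx hy ha hb hab) hε
  refine h.trans_eq ?_
  simp only [smul_eq_mul]
  ring

theorem map_midpoint_le_of_strongConvexOn (hφ : StrongConvexOn s c φ) (hx : x ∈ s) (hy : y ∈ s) :
    φ (midpoint ℝ x y) ≤ (φ x + φ y) / 2 - c / 8 * ‖x - y‖ ^ 2 := by
  have hmid : midpoint ℝ x y = (1 / 2 : ℝ) • x + (1 / 2 : ℝ) • y := by
    rw [midpoint_eq_smul_add, smul_add, invOf_eq_inv, one_div]
  have h := hφ.2 hx hy (one_half_pos (α := ℝ)).le one_half_pos.le (add_halves 1)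
  rw [hmid]
  refine h.trans_eq ?_
  simp only [smul_eq_mul]
  ring

theorem exists_affine_le_of_convexOn (hφ : ConvexOn ℝ s φ) (hs : IsClosed s)
    (hlsc : LowerSemicontinuousOn φ s) : ∃ (l : V →L[ℝ] ℝ) (b : ℝ), ∀ y ∈ s, l y + b ≤ φ y := by
  rcases s.eq_empty_or_nonempty with rfl | ⟨x, hx⟩
  · simp
  obtain ⟨l, b, hle, -⟩ := hφ.exists_affine_le_of_lt (𝕜 := ℝ) hx (sub_one_lt (φ x)) hs hlsc
  exact ⟨l, b, fun y hy => hle ⟨y, hy⟩⟩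

theorem bddBelow_image_of_strongConvexOn (hφ : StrongConvexOn s c φ) (hc : 0 < c)
    (hs : IsClosed s) (hlsc : LowerSemicontinuousOn φ s) : BddBelow (φ '' s) := by
  rcases s.eq_empty_or_nonempty with rfl | ⟨x, hx⟩
  · simp
  obtain ⟨l, b, hl⟩ := exists_affine_le_of_convexOn (hφ.strictConvexOn hc).convexOn hs hlsc
  refine ⟨2 * l x + 2 * b - φ x - ‖l‖ ^ 2 / c, forall_mem_image.2 fun y hy => ?_⟩
  have hmid := map_midpoint_le_of_strongConvexOn hφ hx hy
  have hlmid : l (midpoint ℝ x y) = (l x + l y) / 2 := by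
    rw [midpoint_eq_smul_add, map_smul, map_add, smul_eq_mul, invOf_eq_inv, inv_mul_eq_div]
  have hminorant := hl _ (hφ.1.midpoint_mem hx hy)
  have hslope : l x - l y ≤ ‖l‖ * ‖x - y‖ := by
    rw [← map_sub]
    exact (le_abs_self _).trans (l.le_opNorm (x - y))
  have hyoung : ‖l‖ * ‖x - y‖ ≤ ‖l‖ ^ 2 / c + c / 4 * ‖x - y‖ ^ 2 := by
    have hsq : ‖l‖ ^ 2 / c + c / 4 * ‖x - y‖ ^ 2 - ‖l‖ * ‖x - y‖ =
        (‖l‖ - c / 2 * ‖x - y‖) ^ 2 / c := by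
      field_simp
      ring
    rw [← sub_nonneg, hsq]
    positivity
  linarith

theorem sq_norm_sub_le_of_strongConvexOn (hφ : StrongConvexOn s c φ)
    (hr : r ∈ lowerBounds (φ '' s)) (hx : x ∈ s) (hy : y ∈ s) :
    c / 4 * ‖x - y‖ ^ 2 ≤ (φ x - r) + (φ y - r) := by
  have hmid := map_midpoint_le_of_strongConvexOn hφ hx hy
  have hle := hr (mem_image_of_mem φ (hφ.1.midpoint_mem hx hy))
  linarith

theorem cauchySeq_of_strongConvexOn (hφ : StrongConvexOn s c φ) (hc : 0 < c)
    (hr : r ∈ lowerBounds (φ '' s)) {u : ℕ → V} (hu : ∀ n, u n ∈ s)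
    (hur : Tendsto (fun n => φ (u n)) atTop (𝓝 r)) : CauchySeq u := by
  have hgap : Tendsto (fun n => φ (u n) - r) atTop (𝓝 0) := by
    simpa only [sub_self] using hur.sub_const r
  have hgap₂ : Tendsto
      (fun p : ℕ × ℕ => √(4 / c * ((φ (u p.1) - r) + (φ (u p.2) - r)))) atTop (𝓝 0) := by
    rw [← prod_atTop_atTop_eq]
    simpa only [Function.comp_def, add_zero, mul_zero, Real.sqrt_zero] using
      (((hgap.comp tendsto_fst).add (hgap.comp tendsto_snd)).const_mul (4 / c)).sqrt
  refine cauchySeq_iff_tendsto_dist_atTop_0.2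
    (squeeze_zero (fun _ => dist_nonneg) (fun p => Real.le_sqrt_of_sq_le ?_) hgap₂)
  have h := sq_norm_sub_le_of_strongConvexOn hφ hr (hu p.1) (hu p.2)
  rw [dist_eq_norm, div_mul_eq_mul_div, le_div_iff₀ hc]
  linarith

theorem existsUnique_isMinOn_of_strongConvexOn [CompleteSpace V] (hφ : StrongConvexOn s c φ)
    (hc : 0 < c) (hs : IsClosed s) (hne : s.Nonempty) (hlsc : LowerSemicontinuousOn φ s) :
    ∃! y, y ∈ s ∧ IsMinOn φ s y := by
  have hbdd := bddBelow_image_of_strongConvexOn hφ hc hs hlsc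
  have hinf : sInf (φ '' s) ∈ lowerBounds (φ '' s) := fun _ => csInf_le hbdd
  obtain ⟨v, -, hv, hvs⟩ := exists_seq_tendsto_sInf (hne.image φ) hbdd
  choose u hu huv using hvs
  obtain rfl : v = fun n => φ (u n) := funext fun n => (huv n).symm
  obtain ⟨y, huy⟩ := cauchySeq_tendsto_of_complete (cauchySeq_of_strongConvexOn hφ hc hinf hu hv)
  have hy : y ∈ s := hs.mem_of_tendsto huy (Eventually.of_forall hu)
  have huy' : Tendsto u atTop (𝓝[s] y) :=
    tendsto_nhdsWithin_iff.2 ⟨huy, Eventually.of_forall hu⟩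
  have hle : φ y ≤ sInf (φ '' s) := le_of_tendsto_of_lowerSemicontinuousWithinAt (hlsc y hy) huy' hv
  have hmin : IsMinOn φ s y := fun z hz => hle.trans (hinf (mem_image_of_mem φ hz))
  exact ⟨y, ⟨hy, hmin⟩, fun z ⟨hz, hzmin⟩ =>
    (hφ.strictConvexOn hc).eq_of_isMinOn hzmin hmin hz hy⟩

end StrongConvex

section Bregman

variable {H : Type*} [NormedAddCommGroup H] [InnerProductSpace ℝ H] {s : Set H}
  {f' K' : H → H} {g K : H → ℝ} {m ε ρ : ℝ}

theorem convexOn_inner_sub (hs : Convex ℝ s) (v x : H) : ConvexOn ℝ s fun y => ⟪v, y - x⟫ := by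
  simp only [inner_sub_right]
  exact ((innerₗ H v).convexOn hs).sub (concaveOn_const ⟪v, x⟫ hs)

theorem strongConvexOn_neg_iff_convexOn_add :
    StrongConvexOn s (-ρ) g ↔ ConvexOn ℝ s fun y => g y + ρ / 2 * ‖y‖ ^ 2 := by
  simp only [strongConvexOn_iff_convex, neg_div, neg_mul, sub_neg_eq_add]

theorem strongConvexOn_of_add_inner_le (hs : Convex ℝ s)
    (hK : ∀ x ∈ s, ∀ y ∈ s, K x + ⟪K' x, y - x⟫ + m / 2 * ‖y - x‖ ^ 2 ≤ K y) :
    StrongConvexOn s m K := by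
  refine ⟨hs, fun x hx y hy a b ha hb hab => ?_⟩
  set w := a • x + b • y with hw
  have hws : w ∈ s := hs hx hy ha hb hab
  obtain rfl : a = 1 - b := eq_sub_of_add_eq hab
  have hxw : x - w = b • (x - y) := by rw [hw]; module
  have hyw : y - w = -((1 - b) • (x - y)) := by rw [hw]; module
  have hKx := hK w hws x hx
  have hKy := hK w hws y hy
  rw [hxw, inner_smul_right, norm_smul, Real.norm_of_nonneg hb] at hKx
  rw [hyw, inner_neg_right, inner_smul_right, norm_neg, norm_smul, Real.norm_of_nonneg ha] at hKy
  have hsum := add_le_add (mul_le_mul_of_nonneg_left hKx ha) (mul_le_mul_of_nonneg_left hKy hb)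
  simp only [smul_eq_mul]
  linarith

theorem strongConvexOn_bregD (hK : StrongConvexOn s m K) (x : H) :
    StrongConvexOn s m (bregD K K' x) := by
  have hlin : StrongConvexOn s 0 fun y => ⟪-K' x, y - x⟫ + -K x :=
    strongConvexOn_zero.2 ((convexOn_inner_sub hK.1 (-K' x) x).add_const (-K x))
  have h := strongConvexOn_add hK hlin
  rw [add_zero] at h
  convert h using 2 with y
  rw [bregD, inner_neg_left]
  ring

/-- The function of `y` that the Bregman proximal mapping `bregT` minimizes at the base point
`x`. -/
def bregObjective (f' : H → H) (g K : H → ℝ) (K' : H → H) (ε : ℝ) (x y : H) : ℝ :=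
  ⟪f' x, y - x⟫ + g y + bregD K K' x y / ε

theorem mem_bregT_iff_isMinOn {x y : H} :
    y ∈ bregT f' g K K' ε x ↔ IsMinOn (bregObjective f' g K K' ε x) univ y :=
  (isMinOn_univ_iff (f := bregObjective f' g K K' ε x)).symm

theorem strongConvexOn_bregObjective (hg : ConvexOn ℝ s fun y => g y + ρ / 2 * ‖y‖ ^ 2)
    (hK : StrongConvexOn s m K) (hε : 0 ≤ ε) (x : H) :
    StrongConvexOn s (m / ε - ρ) (bregObjective f' g K K' ε x) := by
  have hlin : StrongConvexOn s 0 fun y => ⟪f' x, y - x⟫ :=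
    strongConvexOn_zero.2 (convexOn_inner_sub hg.1 (f' x) x)
  have h := strongConvexOn_add
    (strongConvexOn_add hlin (strongConvexOn_neg_iff_convexOn_add.2 hg))
    (strongConvexOn_div (strongConvexOn_bregD (K' := K') hK x) hε)
  rwa [zero_add, neg_add_eq_sub] at h

theorem lowerSemicontinuous_bregObjective (hg : LowerSemicontinuous g) (hK : Continuous K)
    (x : H) : LowerSemicontinuous (bregObjective f' g K K' ε x) := by
  have hlin : Continuous fun y => ⟪f' x, y - x⟫ := by fun_prop
  have hD : Continuous fun y => bregD K K' x y / ε := by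
    simp only [bregD]
    fun_prop
  exact (hlin.lowerSemicontinuous.add hg).add hD.lowerSemicontinuous

end Bregman

theorem stmt13_general {H : Type*} [NormedAddCommGroup H] [InnerProductSpace ℝ H] [CompleteSpace H]
    (f g : H → ℝ) (f' : H → H)
    (_hf : ∀ x, HasGradientAt f (f' x) x)
    (hg : LowerSemicontinuous g)
    (K : H → ℝ) (K' : H → H) (m : ℝ)
    (hK : ∀ x, HasGradientAt K (K' x) x)
    (hKstrong : ∀ x y : H, K x + ⟪K' x, y - x⟫ + m / 2 * ‖y - x‖ ^ 2 ≤ K y)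
    (ε : ℝ) (hε : 0 < ε)
    (ρ : ℝ)
    (hsemi : ConvexOn ℝ Set.univ (fun y : H => g y + ρ / 2 * ‖y‖ ^ 2))
    (hερ : ε * ρ < m) :
    ∀ x : H, ∃ y : H, bregT f' g K K' ε x = {y} := by
  intro x
  have hKcont : Continuous K := continuous_iff_continuousAt.2 fun z => (hK z).continuousAt
  have hKconv : StrongConvexOn univ m K :=
    strongConvexOn_of_add_inner_le convex_univ fun x _ y _ => hKstrong x y
  have hmod : 0 < m / ε - ρ := sub_pos.2 ((lt_div_iff₀' hε).2 hερ)
  obtain ⟨y, ⟨-, hy⟩, huniq⟩ := existsUnique_isMinOn_of_strongConvexOn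
    (strongConvexOn_bregObjective (f' := f') (K' := K') hsemi hKconv hε.le x) hmod isClosed_univ
    univ_nonempty ((lowerSemicontinuous_bregObjective hg hKcont x).lowerSemicontinuousOn univ)
  exact ⟨y, eq_singleton_iff_unique_mem.2 ⟨mem_bregT_iff_isMinOn.2 hy,
    fun z hz => huniq z ⟨mem_univ z, mem_bregT_iff_isMinOn.1 hz⟩⟩⟩

/-- Single-valuedness of the Bregman proximal mapping when `g` is semiconvex with
modulus `ρ` and `εL < m`, `ερ < m`. -/
theorem stmt13
    (f g : E → ℝ) (f' : E → E) (L : ℝ)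
    (hL : 0 < L)
    (hf : ∀ x, HasGradientAt f (f' x) x)
    (hlip : ∀ x y, ‖f' x - f' y‖ ≤ L * ‖x - y‖)
    (hg : Continuous g)
    (hlevel : ∀ r : ℝ, Bornology.IsBounded {x : E | f x + g x ≤ r})
    (K : E → ℝ) (K' : E → E) (m M : ℝ)
    (hm : 0 < m) (hmM : m ≤ M)
    (hK : ∀ x, HasGradientAt K (K' x) x)
    (hKstrong : ∀ x y : E, K x + ⟪K' x, y - x⟫ + m / 2 * ‖y - x‖ ^ 2 ≤ K y)
    (hKlip : ∀ x y, ‖K' x - K' y‖ ≤ M * ‖x - y‖)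
    (ε : ℝ) (hε : 0 < ε)
    (ρ : ℝ) (hρ : 0 ≤ ρ)
    (hsemi : ConvexOn ℝ Set.univ (fun y : E => g y + ρ / 2 * ‖y‖ ^ 2))
    (hεL : ε * L < m) (hερ : ε * ρ < m) :
    ∀ x : E, ∃ y : E, bregT f' g K K' ε x = {y} :=
  stmt13_general f g f' hf hg.lowerSemicontinuous K K' m hK hKstrong ε hε ρ hsemi hερ
end
end

section
/- Level-set subdifferential error bound under weak metric subregularity: assume Assumption H1 and let x̄ satisfy 0 ∈ ∂_P F(x̄), F̄ = F(x̄), and X̄_P = {x | 0 ∈ ∂_P F(x)}. Suppose (Assumption H3) there is δ > 0 such that F(y) ≤ F̄ for every y ∈ X̄_P with ‖y − x̄‖ ≤ δ, and suppose ∂_P F is weakly metrically subregular at x̄ for 0: there exist η, ν, c₅ > 0 such that ‖ξ‖ ≥ c₅ · infDist(x, X̄_P) for every x ∈ 𝔅(x̄;η,ν) and every ξ ∈ ∂_P F(x). Then the level-set subdifferential error bound holds at x̄ with exponent γ = 1: there exist η', ν', c₃ > 0 such that infDist(x, [F ≤ F̄]) ≤ c₃ · ‖ξ‖ for every x ∈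 𝔅(x̄;η',ν') and every ξ ∈ ∂_P F(x). -/
/-!
Let `D` stand for the subdifferential of `F`, and `x` for the given critical point. Critical points
near `x` lie in the sublevel set `[F ≤ F x]` by separation, and one far from `x` is no nearer to a
point `y` close to `x` than `x` itself. So the distance from `y` to the sublevel set is at most its
distance to the critical set, which subregularity bounds by a multiple of `‖ξ‖` for `ξ ∈ D y`.
-/

open Set Metric Filter Topology
open scoped RealInnerProductSpace

noncomputable section

variable {E : Type*} [NormedAddCommGroup E] [InnerProductSpace ℝ E] [FiniteDimensional ℝ E]

/-- The proximal subdifferential of `ψ` at `x`. -/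
def proxSubdiff (ψ : E → ℝ) (x : E) : Set E :=
  {ξ | ∃ ρ > (0:ℝ), ∃ η > (0:ℝ), ∀ y, ‖y - x‖ < η →
    ψ y ≥ ψ x + ⟪ξ, y - x⟫ - ρ * ‖y - x‖ ^ 2}

section LevelSetErrorBound

variable {α β : Type*}

/-- The zeros of a set-valued map; for a subdifferential these are the critical points. -/
def zeroSet [Zero β] (D : α → Set β) : Set α :=
  {z | 0 ∈ D z}

variable [PseudoMetricSpace α]

theorem infDist_le_infDist_of_inter_closedBall_subset {S T : Set α} {x y : α} {δ : ℝ}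
    (hx : x ∈ S) (hST : S ∩ closedBall x δ ⊆ T) (hy : dist y x ≤ δ / 2) :
    infDist y T ≤ infDist y S := by
  have hδ : 0 ≤ δ := by linarith [dist_nonneg (x := y) (y := x)]
  have hxT : x ∈ T := hST ⟨hx, mem_closedBall_self hδ⟩
  refine (le_infDist ⟨x, hx⟩).2 fun z hz => ?_
  by_cases hzδ : dist z x ≤ δ
  · exact infDist_le_dist_of_mem (hST ⟨hz, hzδ⟩)
  · calc
      infDist y T ≤ dist y x := infDist_le_dist_of_mem hxT
      _ ≤ dist y z := by linarith [dist_triangle_left z x y]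

/-- The set `𝔅(x; η, ν)` of points near `x` whose values lie strictly and slightly above `F x`. -/
def strictLevelBall (F : α → ℝ) (x : α) (η ν : ℝ) : Set α :=
  ball x η ∩ F ⁻¹' Ioo (F x) (F x + ν)

/-- Proper separation of the values of `F` on the zeros of `D` near `x` (Assumption H3). -/
def IsProperlySeparatedAt [Zero β] (F : α → ℝ) (D : α → Set β) (x : α) : Prop :=
  ∃ δ > 0, zeroSet D ∩ closedBall x δ ⊆ {z | F z ≤ F x}

/-- Weak metric subregularity of `D` at `x` for `0`, tested only strictly above the level `F x`.
As `infDist y ∅ = 0`, it is void when `D` has no zeros. -/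
def IsWeaklyMetricSubregularAt [SeminormedAddGroup β] (F : α → ℝ) (D : α → Set β) (x : α) : Prop :=
  ∃ η ν c : ℝ, 0 < η ∧ 0 < ν ∧ 0 < c ∧
    ∀ y ∈ strictLevelBall F x η ν, ∀ ξ ∈ D y, c * infDist y (zeroSet D) ≤ ‖ξ‖

/-- The level-set error bound at `x` with exponent `γ = 1`, for an arbitrary set-valued map `D` in
the role of the subdifferential of `F`. -/
def HasLevelSetErrorBoundAt [Norm β] (F : α → ℝ) (D : α → Set β) (x : α) : Prop :=
  ∃ η ν c : ℝ, 0 < η ∧ 0 < ν ∧ 0 < c ∧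
    ∀ y ∈ strictLevelBall F x η ν, ∀ ξ ∈ D y, infDist y {z | F z ≤ F x} ≤ c * ‖ξ‖

theorem stmt17_general [SeminormedAddGroup β] {F : α → ℝ} {D : α → Set β} {x : α}
    (hx : x ∈ zeroSet D) (hsep : IsProperlySeparatedAt F D x)
    (hsub : IsWeaklyMetricSubregularAt F D x) :
    HasLevelSetErrorBoundAt F D x := by
  obtain ⟨δ, hδ, hsep⟩ := hsep
  obtain ⟨η, ν, c, hη, hν, hc, hsub⟩ := hsub
  refine ⟨min η (δ / 2), ν, c⁻¹, lt_min hη (half_pos hδ), hν, inv_pos.2 hc, fun y hy ξ hξ => ?_⟩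
  have hyη : y ∈ strictLevelBall F x η ν := ⟨ball_subset_ball (min_le_left _ _) hy.1, hy.2⟩
  have hyδ : dist y x ≤ δ / 2 := (hy.1.trans_le (min_le_right _ _)).le
  calc
    infDist y {z | F z ≤ F x} ≤ infDist y (zeroSet D) :=
      infDist_le_infDist_of_inter_closedBall_subset hx hsep hyδ
    _ ≤ c⁻¹ * ‖ξ‖ := (le_inv_mul_iff₀ hc).2 (hsub y hyη ξ hξ)

end LevelSetErrorBound

/-- Weak metric subregularity of `∂_P F` at a proximal critical point, together with
the proper separation assumption (H₃), implies the level-set subdifferential error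
bound with exponent `γ = 1`. -/
theorem stmt17
    (f g : E → ℝ) (f' : E → E) (L : ℝ)
    (hL : 0 < L)
    (hf : ∀ x, HasGradientAt f (f' x) x)
    (hlip : ∀ x y, ‖f' x - f' y‖ ≤ L * ‖x - y‖)
    (hg : Continuous g)
    (hlevel : ∀ r : ℝ, Bornology.IsBounded {x : E | f x + g x ≤ r})
    (xbar : E) (hcrit : (0 : E) ∈ proxSubdiff (fun z => f z + g z) xbar)
    (δ : ℝ) (hδ : 0 < δ)
    (hH3 : ∀ y : E, (0 : E) ∈ proxSubdiff (fun z => f z + g z) y → ‖y - xbar‖ ≤ δ →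
      f y + g y ≤ f xbar + g xbar)
    (η ν c₅ : ℝ) (hη : 0 < η) (hν : 0 < ν) (hc₅ : 0 < c₅)
    (hsub : ∀ y : E, ‖y - xbar‖ < η → f xbar + g xbar < f y + g y →
      f y + g y < f xbar + g xbar + ν →
      ∀ ξ ∈ proxSubdiff (fun z => f z + g z) y,
        c₅ * Metric.infDist y {z : E | (0 : E) ∈ proxSubdiff (fun w => f w + g w) z}
          ≤ ‖ξ‖) :
    ∃ η' ν' c₃ : ℝ, 0 < η' ∧ 0 < ν' ∧ 0 < c₃ ∧
      ∀ y : E, ‖y - xbar‖ < η' → f xbar + g xbar < f y + g y →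
        f y + g y < f xbar + g xbar + ν' →
        ∀ ξ ∈ proxSubdiff (fun z => f z + g z) y,
          Metric.infDist y {z : E | f z + g z ≤ f xbar + g xbar} ≤ c₃ * ‖ξ‖ := by
  simpa [HasLevelSetErrorBoundAt, strictLevelBall, dist_eq_norm] using
    stmt17_general (F := fun z => f z + g z) (D := proxSubdiff fun z => f z + g z) hcrit
      ⟨δ, hδ, fun z hz => hH3 z hz.1 (mem_closedBall_iff_norm.1 hz.2)⟩
      ⟨η, ν, c₅, hη, hν, hc₅, fun y hy => hsub y (mem_ball_iff_norm.1 hy.1) hy.2.1 hy.2.2⟩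
end
end

section
/- Bregman proximal gap condition implies the KL inequality with exponent q/2: under Assumption H1 and the Bregman setting, suppose g is semiconvex with modulus ρ ≥ 0 and 0 < ε, ε·L < m, ε·ρ < m. Suppose the Bregman proximal gap condition holds at x̄: there exist η, ν, μ > 0 and q ∈ [0,2) such that G(x) ≥ μ·(F(x) − F̄)^q for all x ∈ 𝔅(x̄;η,ν), where F̄ = F(x̄). Then for every x ∈ 𝔅(x̄;η,ν) and every ν' ∈ ∂_P g(x): ‖∇f(x) + ν'‖ ≥ √(2(m − ερ)μ) · (F(x) − F̄)^{q/2}. -/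
open Set Metric Filter Topology
open scoped RealInnerProductSpace

noncomputable section

variable {E : Type*} [NormedAddCommGroup E] [InnerProductSpace ℝ E] [FiniteDimensional ℝ E]

/-!
A proximal subgradient of a semiconvex function satisfies the subgradient inequality globally, with
the quadratic error `ρ / 2 * ‖y - x‖ ^ 2` in place of the unknown local one. Adding the strong
convexity of the kernel, the model minimised in the Bregman envelope at `x` is bounded below by
`F x + ⟪∇f x + ξ, y - x⟫ + (m / ε - ρ) / 2 * ‖y - x‖ ^ 2`. Completing the square bounds the proximal
gap by `‖∇f x + ξ‖ ^ 2 / (2 * (m - ε * ρ))`, and the gap condition bounds it from below.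
-/

section

omit [FiniteDimensional ℝ E]

variable {f g K ψ : E → ℝ} {f' K' : E → E} {s : Set E} {c m q ε μ ρ σ : ℝ} {x y ξ : E}

theorem add_inner_add_le_of_mem_proxSubdiff (hψ : StrongConvexOn s σ ψ) (hx : x ∈ s) (hy : y ∈ s)
    (hξ : ξ ∈ proxSubdiff ψ x) : ψ x + ⟪ξ, y - x⟫ + σ / 2 * ‖y - x‖ ^ 2 ≤ ψ y := by
  -- At `x + t • (y - x)`, `hξ` bounds `ψ` below and convexity bounds it above. Both bounds are
  -- `ψ x + O(t)`, so divide their comparison by `t` and let `t → 0`.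
  obtain ⟨r, -, η, hη, hlocal⟩ := hξ
  let φ : ℝ → ℝ := fun t => ψ x + ⟪ξ, y - x⟫ + ((1 - t) * (σ / 2) - t * r) * ‖y - x‖ ^ 2
  have hφ : Tendsto φ (𝓝[>] 0) (𝓝 (ψ x + ⟪ξ, y - x⟫ + σ / 2 * ‖y - x‖ ^ 2)) := by
    have hcont : Continuous φ := by fun_prop
    simpa [φ] using (hcont.tendsto 0).mono_left nhdsWithin_le_nhds
  have hnear : ∀ᶠ t : ℝ in 𝓝[>] 0, t * ‖y - x‖ < η := by
    have hcont : Continuous fun t : ℝ => t * ‖y - x‖ := by fun_prop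
    exact nhdsWithin_le_nhds (hcont.tendsto' 0 0 (zero_mul _) |>.eventually_lt_const hη)
  refine le_of_tendsto hφ ?_
  filter_upwards [hnear, Ioo_mem_nhdsGT one_pos] with t ht ⟨ht0, ht1⟩
  have hstep : (1 - t) • x + t • y - x = t • (y - x) := by module
  have hnorm : ‖(1 - t) • x + t • y - x‖ = t * ‖y - x‖ := by
    rw [hstep, norm_smul, Real.norm_of_nonneg ht0.le]
  have hlower := hlocal ((1 - t) • x + t • y) (hnorm ▸ ht)
  have hupper := hψ.2 hx hy (sub_nonneg.2 ht1.le) ht0.le (sub_add_cancel 1 t)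
  rw [hnorm, hstep, inner_smul_right] at hlower
  simp only [smul_eq_mul, norm_sub_rev x y] at hupper
  refine le_of_mul_le_mul_left ?_ ht0
  linear_combination hlower + hupper

theorem neg_norm_sq_div_le_inner_add (hc : 0 < c) (u v : E) :
    -(‖u‖ ^ 2 / (2 * c)) ≤ ⟪u, v⟫ + c / 2 * ‖v‖ ^ 2 := by
  have hsq : ‖u + c • v‖ ^ 2 = ‖u‖ ^ 2 + 2 * c * (⟪u, v⟫ + c / 2 * ‖v‖ ^ 2) := by
    rw [norm_add_sq_real, inner_smul_right, norm_smul, Real.norm_of_nonneg hc.le]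
    ring
  rw [← neg_div, div_le_iff₀ (by positivity)]
  linarith [sq_nonneg ‖u + c • v‖]

theorem sub_le_bregEnv (hε : 0 < ε) (hερ : ε * ρ < m)
    (hK : ∀ y, K x + ⟪K' x, y - x⟫ + m / 2 * ‖y - x‖ ^ 2 ≤ K y)
    (hg : ∀ y, g x + ⟪ξ, y - x⟫ - ρ / 2 * ‖y - x‖ ^ 2 ≤ g y) :
    f x + g x - ‖f' x + ξ‖ ^ 2 / (2 * (m / ε - ρ)) ≤ bregEnv f f' g K K' ε x := by
  refine le_ciInf fun y => ?_
  have hcurv : 0 < m / ε - ρ := sub_pos.2 ((lt_div_iff₀' hε).2 hερ)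
  have hD : m / ε / 2 * ‖y - x‖ ^ 2 ≤ bregD K K' x y / ε := by
    rw [le_div_iff₀ hε, bregD]
    calc m / ε / 2 * ‖y - x‖ ^ 2 * ε = m / 2 * ‖y - x‖ ^ 2 := by field_simp
      _ ≤ K y - K x - ⟪K' x, y - x⟫ := by linarith [hK y]
  have hsquare := neg_norm_sq_div_le_inner_add hcurv (f' x + ξ) (y - x)
  rw [inner_add_left] at hsquare
  linarith [hg y]

/-- The Bregman proximal gap `G x = (F x - E x) / ε`, where `F = f + g` and `E` is the Bregman
proximal envelope. It measures how far `x` is from being fixed by a Bregman proximal step. -/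
def bregGap (f : E → ℝ) (f' : E → E) (g : E → ℝ) (K : E → ℝ) (K' : E → E) (ε : ℝ) (x : E) : ℝ :=
  (f x + g x - bregEnv f f' g K K' ε x) / ε

theorem two_mul_bregGap_le_norm_sq (hε : 0 < ε) (hερ : ε * ρ < m)
    (hK : ∀ y, K x + ⟪K' x, y - x⟫ + m / 2 * ‖y - x‖ ^ 2 ≤ K y)
    (hg : StrongConvexOn univ (-ρ) g) (hξ : ξ ∈ proxSubdiff g x) :
    2 * (m - ε * ρ) * bregGap f f' g K K' ε x ≤ ‖f' x + ξ‖ ^ 2 := by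
  have hsub (y : E) : g x + ⟪ξ, y - x⟫ - ρ / 2 * ‖y - x‖ ^ 2 ≤ g y := by
    linarith [add_inner_add_le_of_mem_proxSubdiff hg (mem_univ x) (mem_univ y) hξ]
  have hmρ : 0 < m - ε * ρ := sub_pos.2 hερ
  have hgap : bregGap f f' g K K' ε x ≤ ‖f' x + ξ‖ ^ 2 / (2 * (m - ε * ρ)) := by
    rw [bregGap, div_le_iff₀ hε]
    calc f x + g x - bregEnv f f' g K K' ε x
        ≤ ‖f' x + ξ‖ ^ 2 / (2 * (m / ε - ρ)) := sub_le_comm.1 (sub_le_bregEnv hε hερ hK hsub)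
      _ = ‖f' x + ξ‖ ^ 2 / (2 * (m - ε * ρ)) * ε := by
        have hscale : m / ε - ρ = (m - ε * ρ) / ε := by field_simp
        rw [hscale]
        field_simp
  exact (le_div_iff₀' (by positivity)).1 hgap

theorem sqrt_mul_rpow_half_le {a b r : ℝ} (hb : 0 ≤ b) (hr : 0 ≤ r) (h : a * b ^ q ≤ r ^ 2) :
    √a * b ^ (q / 2) ≤ r := by
  have hsqrt : √(b ^ q) = b ^ (q / 2) := by
    rw [Real.sqrt_eq_rpow, ← Real.rpow_mul hb, mul_one_div]
  rw [← hsqrt, ← Real.sqrt_mul' a (Real.rpow_nonneg hb q)]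
  exact (Real.sqrt_le_left hr).2 h

theorem stmt18_general [CompleteSpace E] {Fbar : ℝ}
    (hf : HasGradientAt f (f' x) x) (hK : HasGradientAt K (K' x) x)
    (hKstrong : ∀ y, K x + ⟪K' x, y - x⟫ + m / 2 * ‖y - x‖ ^ 2 ≤ K y)
    (hε : 0 < ε) (hsemi : ConvexOn ℝ univ fun y : E => g y + ρ / 2 * ‖y‖ ^ 2) (hερ : ε * ρ < m)
    (hμ : 0 < μ) (hx : Fbar < f x + g x)
    (hgap : μ * (f x + g x - Fbar) ^ q ≤ bregGap f f' g K K' ε x) (hξ : ξ ∈ proxSubdiff g x) :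
    √(2 * (m - ε * ρ) * μ) * (f x + g x - Fbar) ^ (q / 2) ≤ ‖f' x + ξ‖ := by
  have hg : StrongConvexOn univ (-ρ) g :=
    strongConvexOn_iff_convex.2 (by simpa only [neg_div, neg_mul, sub_neg_eq_add] using hsemi)
  refine sqrt_mul_rpow_half_le (sub_pos.2 hx).le (norm_nonneg _) ?_
  calc 2 * (m - ε * ρ) * μ * (f x + g x - Fbar) ^ q
      = 2 * (m - ε * ρ) * (μ * (f x + g x - Fbar) ^ q) := mul_assoc _ _ _
    _ ≤ 2 * (m - ε * ρ) * bregGap f f' g K K' ε x :=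
        mul_le_mul_of_nonneg_left hgap (by linarith)
    _ ≤ ‖f' x + ξ‖ ^ 2 := two_mul_bregGap_le_norm_sq hε hερ hKstrong hg hξ

end

/-- The Bregman proximal gap condition with exponent `q` implies the KL inequality with
exponent `q/2` (when `g` is semiconvex). -/
theorem stmt18
    (f g : E → ℝ) (f' : E → E) (L : ℝ)
    (hL : 0 < L)
    (hf : ∀ x, HasGradientAt f (f' x) x)
    (hlip : ∀ x y, ‖f' x - f' y‖ ≤ L * ‖x - y‖)
    (hg : Continuous g)
    (hlevel : ∀ r : ℝ, Bornology.IsBounded {x : E | f x + g x ≤ r})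
    (K : E → ℝ) (K' : E → E) (m M : ℝ)
    (hm : 0 < m) (hmM : m ≤ M)
    (hK : ∀ x, HasGradientAt K (K' x) x)
    (hKstrong : ∀ x y : E, K x + ⟪K' x, y - x⟫ + m / 2 * ‖y - x‖ ^ 2 ≤ K y)
    (hKlip : ∀ x y, ‖K' x - K' y‖ ≤ M * ‖x - y‖)
    (ε : ℝ) (hε : 0 < ε)
    (ρ : ℝ) (hρ : 0 ≤ ρ)
    (hsemi : ConvexOn ℝ Set.univ (fun y : E => g y + ρ / 2 * ‖y‖ ^ 2))
    (hεL : ε * L < m) (hερ : ε * ρ < m)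
    (xbar : E) (η ν μ q : ℝ)
    (hη : 0 < η) (hν : 0 < ν) (hμ : 0 < μ) (hq0 : 0 ≤ q) (hq2 : q < 2)
    (hgap : ∀ y : E, ‖y - xbar‖ < η → f xbar + g xbar < f y + g y →
      f y + g y < f xbar + g xbar + ν →
      μ * (f y + g y - (f xbar + g xbar)) ^ q ≤
        ((f y + g y) - bregEnv f f' g K K' ε y) / ε) :
    ∀ y : E, ‖y - xbar‖ < η → f xbar + g xbar < f y + g y →
      f y + g y < f xbar + g xbar + ν →
      ∀ ν' ∈ proxSubdiff g y,
        Real.sqrt (2 * (m - ε * ρ) * μ) * (f y + g y - (f xbar + g xbar)) ^ (q / 2) ≤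
          ‖f' y + ν'‖ :=
  fun y hyη hyF hyν _ hν' =>
    stmt18_general (hf y) (hK y) (hKstrong y) hε hsemi hερ hμ hyF (hgap y hyη hyF hyν) hν'
end
end

section
/- The level-set subdifferential error bound is strictly weaker than the KL property: fix x̄ ∈ ℝ and define ψ : ℝ → ℝ by ψ(x) = (1/2)(x − x̄)² for x ≠ x̄ and ψ(x̄) = −1. Then: (a) for every x ≠ x̄ and every ξ ∈ ∂_P ψ(x), infDist(x, {y | ψ(y) ≤ ψ(x̄)}) ≤ |ξ| (so the level-set subdifferential error bound holds at x̄ with exponent γ = 1 and constant c₃ = 1 on every set 𝔅(x̄;η,ν)); and (b) for all c > 0, α ∈ (0,1), η > 0 and ν > 0 such that 𝔅(x̄;η,ν) = {x | |x − x̄| < η and ψ(x̄) < ψ(x) < ψ(x̄) + ν} is nonempty, there exist x ∈ 𝔅(x̄;η,ν) and ξ ∈ ∂_P ψ(x) with |ξ| < c·(ψ(x) − ψ(x̄))^α (so the KL property with any exponent α fails at x̄). -/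
open Set Metric
open scoped Classical

noncomputable section

/-- The proximal subdifferential of `ψ : ℝ → ℝ` at `x`. -/
def proxSubdiffR (ψ : ℝ → ℝ) (x : ℝ) : Set ℝ :=
  {ξ | ∃ ρ > (0:ℝ), ∃ η > (0:ℝ), ∀ y, |y - x| < η →
    ψ y ≥ ψ x + ξ * (y - x) - ρ * (y - x) ^ 2}

/-!
Away from `xbar` the function `ψ` is smooth, so its only proximal subgradient there is the
derivative `x - xbar`. Its size equals the distance to `xbar`, a point of the sublevel set, which
is the error bound. As `x → xbar` this subgradient tends to `0`, whereas the gap `ψ x - ψ xbar`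
tends to the height of the jump at `xbar`, which is positive; hence no inequality
`c * (ψ x - ψ xbar) ^ α ≤ |ξ|` with `c > 0` can hold near `xbar`.
-/

open Filter Topology

section ProximalSubdifferential

variable {ψ φ : ℝ → ℝ} {x ξ : ℝ}

theorem mem_proxSubdiffR_iff_eventually :
    ξ ∈ proxSubdiffR ψ x ↔
      ∃ ρ > 0, ∀ᶠ y in 𝓝 x, ψ x + ξ * (y - x) - ρ * (y - x) ^ 2 ≤ ψ y := by
  simp only [proxSubdiffR, mem_ofPred_eq, Metric.eventually_nhds_iff, Real.dist_eq, ge_iff_le]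

theorem mem_proxSubdiffR_of_eventually_le (h : ∀ᶠ y in 𝓝 x, ψ x + ξ * (y - x) ≤ ψ y) :
    ξ ∈ proxSubdiffR ψ x := by
  refine mem_proxSubdiffR_iff_eventually.2 ⟨1, one_pos, h.mono fun y hy => ?_⟩
  linarith [sq_nonneg (y - x)]

theorem proxSubdiffR_subset_of_eventuallyEq (h : ψ =ᶠ[𝓝 x] φ) :
    proxSubdiffR ψ x ⊆ proxSubdiffR φ x := by
  intro ξ hξ
  obtain ⟨ρ, hρ, hψ⟩ := mem_proxSubdiffR_iff_eventually.1 hξ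
  refine mem_proxSubdiffR_iff_eventually.2 ⟨ρ, hρ, ?_⟩
  filter_upwards [hψ, h] with y hy hyφ
  rwa [← h.eq_of_nhds, ← hyφ]

theorem proxSubdiffR_congr (h : ψ =ᶠ[𝓝 x] φ) : proxSubdiffR ψ x = proxSubdiffR φ x :=
  (proxSubdiffR_subset_of_eventuallyEq h).antisymm (proxSubdiffR_subset_of_eventuallyEq h.symm)

theorem proxSubdiffR_update_of_ne {a : ℝ} (hx : x ≠ a) (v : ℝ) :
    proxSubdiffR (Function.update ψ a v) x = proxSubdiffR ψ x :=
  proxSubdiffR_congr <| (eventually_ne_nhds hx).mono fun _ hy => Function.update_of_ne hy v ψ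

theorem eq_of_mem_proxSubdiffR_of_hasDerivAt {ψ' : ℝ} (hξ : ξ ∈ proxSubdiffR ψ x)
    (hψ : HasDerivAt ψ ψ' x) : ξ = ψ' := by
  obtain ⟨ρ, -, hρ⟩ := mem_proxSubdiffR_iff_eventually.1 hξ
  have hmin : IsLocalMin (fun y => ψ y - ξ * (y - x) + ρ * (y - x) ^ 2) x := by
    filter_upwards [hρ] with y hy
    simp only [sub_self]
    linarith
  have hid : HasDerivAt (fun y => y - x) 1 x := (hasDerivAt_id x).sub_const x
  have hderiv := (hψ.sub (hid.const_mul ξ)).add ((hid.pow 2).const_mul ρ)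
  have hzero : ψ' - ξ = 0 := by simpa using hmin.hasDerivAt_eq_zero hderiv
  exact (sub_eq_zero.1 hzero).symm

theorem proxSubdiffR_half_sq_sub (a x : ℝ) :
    proxSubdiffR (fun y => 1 / 2 * (y - a) ^ 2) x = {x - a} := by
  refine Subset.antisymm (fun ξ hξ => ?_) (singleton_subset_iff.2 ?_)
  · have hderiv : HasDerivAt (fun y => 1 / 2 * (y - a) ^ 2) (x - a) x :=
      ((((hasDerivAt_id' x).sub_const a).pow 2).const_mul (1 / 2)).congr_deriv (by simp)
    exact eq_of_mem_proxSubdiffR_of_hasDerivAt hξ hderiv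
  · refine mem_proxSubdiffR_of_eventually_le (.of_forall fun y => ?_)
    linarith [sq_nonneg (y - x)]

end ProximalSubdifferential

theorem infDist_sublevel_le_dist {X : Type*} [PseudoMetricSpace X] {β : Type*} [Preorder β]
    (ψ : X → β) (x a : X) : infDist x {y | ψ y ≤ ψ a} ≤ dist x a :=
  infDist_le_dist_of_mem (le_refl (ψ a))

/-- The set `𝔅(a; η, ν)` of points within `η` of `a` whose `ψ`-value exceeds `ψ a`, but by less
than `ν`; both the error bound and the KL inequality at `a` are tested on it. -/
def levelBall (ψ : ℝ → ℝ) (a η ν : ℝ) : Set ℝ :=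
  {x | |x - a| < η ∧ ψ a < ψ x ∧ ψ x < ψ a + ν}

theorem pos_of_levelBall_nonempty {ψ : ℝ → ℝ} {a η ν : ℝ} (h : (levelBall ψ a η ν).Nonempty) :
    0 < η :=
  let ⟨_, hx, _⟩ := h
  (abs_nonneg _).trans_lt hx

section Jump

variable {ψ : ℝ → ℝ} {a b η ν : ℝ}

theorem eventually_mem_levelBall (hψ : Tendsto ψ (𝓝[≠] a) (𝓝 b)) (hη : 0 < η) (hab : ψ a < b)
    (hbν : b < ψ a + ν) : ∀ᶠ x in 𝓝[≠] a, x ∈ levelBall ψ a η ν := by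
  have hball : ∀ᶠ x in 𝓝[≠] a, |x - a| < η :=
    eventually_nhdsWithin_of_eventually_nhds (Metric.ball_mem_nhds a hη)
  filter_upwards [hball, hψ.eventually_const_lt hab, hψ.eventually_lt_const hbν]
    with x hx hlo hhi using ⟨hx, hlo, hhi⟩

theorem eventually_abs_lt_const_mul_rpow {X : Type*} {l : Filter X} {g h : X → ℝ} {c : ℝ}
    (hg : Tendsto g l (𝓝 0)) (hh : Tendsto h l (𝓝 b)) (hb : 0 < b) (hc : 0 < c) (α : ℝ) :
    ∀ᶠ x in l, |g x| < c * h x ^ α := by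
  have hrpow : Tendsto (fun x => c * h x ^ α) l (𝓝 (c * b ^ α)) :=
    (hh.rpow_const (Or.inl hb.ne')).const_mul c
  refine hg.abs.eventually_lt hrpow ?_
  rw [abs_zero]
  positivity

theorem exists_mem_levelBall_abs_subgradient_lt {g : ℝ → ℝ} {c : ℝ}
    (hψ : Tendsto ψ (𝓝[≠] a) (𝓝 b)) (hη : 0 < η) (hab : ψ a < b) (hbν : b < ψ a + ν)
    (hg : Tendsto g (𝓝[≠] a) (𝓝 0)) (hsub : ∀ᶠ x in 𝓝[≠] a, g x ∈ proxSubdiffR ψ x)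
    (hc : 0 < c) (α : ℝ) :
    ∃ x ∈ levelBall ψ a η ν, ∃ ξ ∈ proxSubdiffR ψ x, |ξ| < c * (ψ x - ψ a) ^ α := by
  have hlt := eventually_abs_lt_const_mul_rpow hg (hψ.sub_const (ψ a)) (sub_pos.2 hab) hc α
  obtain ⟨x, hx, hξ, hsmall⟩ :=
    ((eventually_mem_levelBall hψ hη hab hbν).and (hsub.and hlt)).exists
  exact ⟨x, hx, g x, hξ, hsmall⟩

end Jump

theorem tendsto_update_half_sq_sub (a v : ℝ) :
    Tendsto (Function.update (fun x => 1 / 2 * (x - a) ^ 2) a v) (𝓝[≠] a) (𝓝 0) := by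
  have hcont : Continuous fun x : ℝ => 1 / 2 * (x - a) ^ 2 := by fun_prop
  have hlim : Tendsto (fun x => 1 / 2 * (x - a) ^ 2) (𝓝[≠] a) (𝓝 0) := by
    simpa using (hcont.tendsto a).mono_left nhdsWithin_le_nhds
  exact hlim.congr' (Function.update_eventuallyEq_nhdsNE _ a a v).symm

theorem lt_of_levelBall_update_half_sq_sub_nonempty {a v η ν : ℝ}
    (h : (levelBall (Function.update (fun x => 1 / 2 * (x - a) ^ 2) a v) a η ν).Nonempty) :
    0 < v + ν := by
  obtain ⟨z, -, hlo, hhi⟩ := h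
  have hza : z ≠ a := by
    rintro rfl
    exact lt_irrefl _ hlo
  rw [Function.update_self, Function.update_of_ne hza] at hhi
  exact lt_of_le_of_lt (by positivity) hhi

theorem stmt19_general (xbar : ℝ) {v : ℝ} (hv : v < 0) (ψ : ℝ → ℝ)
    (hψ : ψ = Function.update (fun x => 1 / 2 * (x - xbar) ^ 2) xbar v) :
    (∀ x, x ≠ xbar → ∀ ξ ∈ proxSubdiffR ψ x, infDist x {y | ψ y ≤ ψ xbar} ≤ |ξ|) ∧
    (∀ c α η ν : ℝ, 0 < c → (levelBall ψ xbar η ν).Nonempty →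
      ∃ x ∈ levelBall ψ xbar η ν, ∃ ξ ∈ proxSubdiffR ψ x, |ξ| < c * (ψ x - ψ xbar) ^ α) := by
  have hsub : ∀ x, x ≠ xbar → proxSubdiffR ψ x = {x - xbar} := fun x hx => by
    rw [hψ, proxSubdiffR_update_of_ne hx, proxSubdiffR_half_sq_sub]
  have hval : ψ xbar = v := by rw [hψ, Function.update_self]
  refine ⟨fun x hx ξ hξ => ?_, fun c α η ν hc hne => ?_⟩
  · rw [hsub x hx, mem_singleton_iff] at hξ
    exact hξ ▸ infDist_sublevel_le_dist ψ x xbar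
  · have hlim : Tendsto ψ (𝓝[≠] xbar) (𝓝 0) := hψ ▸ tendsto_update_half_sq_sub xbar v
    have hν : 0 < v + ν := lt_of_levelBall_update_half_sq_sub_nonempty (hψ ▸ hne)
    have hgrad : Tendsto (fun x => x - xbar) (𝓝[≠] xbar) (𝓝 0) :=
      (tendsto_sub_nhds_zero_iff.2 tendsto_id).mono_left nhdsWithin_le_nhds
    refine exists_mem_levelBall_abs_subgradient_lt hlim (pos_of_levelBall_nonempty hne)
      (hval ▸ hv) (hval ▸ hν) hgrad ?_ hc α
    filter_upwards [self_mem_nhdsWithin] with x hx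
    exact hsub x hx ▸ mem_singleton (x - xbar)

/-- The level-set subdifferential error bound is strictly weaker than the KL property:
for `ψ(x) = (1/2)(x - xbar)²` for `x ≠ xbar` and `ψ(xbar) = -1`, the level-set subdifferential
error bound holds at `xbar` with exponent `γ = 1` and constant `c₃ = 1`, but the KL
property fails at `xbar` for every exponent `α ∈ (0,1)`. -/
theorem stmt19 (xbar : ℝ) (ψ : ℝ → ℝ)
    (hψ : ψ = fun x => if x = xbar then -1 else 1 / 2 * (x - xbar) ^ 2) :
    (∀ x : ℝ, x ≠ xbar → ∀ ξ ∈ proxSubdiffR ψ x,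
      Metric.infDist x {y : ℝ | ψ y ≤ ψ xbar} ≤ |ξ|) ∧
    (∀ c α η ν : ℝ, 0 < c → 0 < α → α < 1 → 0 < η → 0 < ν →
      (∃ x : ℝ, |x - xbar| < η ∧ ψ xbar < ψ x ∧ ψ x < ψ xbar + ν) →
      ∃ x : ℝ, (|x - xbar| < η ∧ ψ xbar < ψ x ∧ ψ x < ψ xbar + ν) ∧
        ∃ ξ ∈ proxSubdiffR ψ x, |ξ| < c * (ψ x - ψ xbar) ^ α) := by
  have h := stmt19_general xbar neg_one_lt_zero ψ (by ext x; rw [hψ, Function.update_apply])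
  exact ⟨h.1, fun c α η ν hc _ _ _ _ hne => h.2 c α η ν hc hne⟩
end
end
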